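/- arXiv:2211.00726 — 2 statements merged into one kernel-verified Lean document; each statement's English description precedes it below -/
import Mathlib

section
/- Let B₋ < 0 < B₊ and B ∈ 𝔖(B₋, B₊) with A₂(x) = x·B(x), and let m ∈ 𝔖(m₋, m₊) and V ∈ 𝔖(V₋, V₊) for some real numbers m₋, m₊, V₋, V₊. Then for every M > 0 there exists ζ₀ ∈ ℝ such that for every ζ ≤ ζ₀ and every pair of smooth compactly supported functions ψ₁, ψ₂ : ℝ → ℂ, with u = −i·ψ₂′ − i·(ζ − A₂)·ψ₂ + (V + m)·ψ₁ and v = −i·ψ₁′ + i·(ζ − A₂)·ψ₁ + (V − m)·ψ₂, one has ∫_ℝ (|u(x)|² + |v(x)|²) dx ≥ M · ∫_ℝ (|ψ₁(x)|² + |ψ₂(x)|²) dx. (This expresses that all eigenvalues of the fibered operator Ĥ(ζ) tend to infinity in absolute value uniformly as ζ → −∞.) -/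
open MeasureTheory

/-- A switch function: smooth, equal to `c` near `-∞` and to `d` near `+∞`. -/
def IsSwitch (c d : ℝ) (f : ℝ → ℝ) : Prop :=
  ContDiff ℝ (⊤ : ℕ∞) f ∧ ∃ α β : ℝ, α < β ∧ (∀ x ≤ α, f x = c) ∧ (∀ x, β ≤ x → f x = d)

/-!
Up to the factor `-i`, the two components of `Ĥ(ζ)(ψ₁, ψ₂)` are `ψ₂' + w ψ₂` and `ψ₁' - w ψ₁` with
`w = ζ - A₂`, perturbed by the bounded potentials `V ± m`. Integrating by parts,
`∫ ‖ψ' + w ψ‖² = ∫ ‖ψ'‖² + ∫ (w² - w') ‖ψ‖²`. Because `B₋ < 0 < B₊`, the function `A₂` is bounded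
below and has bounded derivative, so `w² ∓ w'` is uniformly large as `ζ → -∞`. The perturbation
costs a factor `1/2` and a fixed multiple of `∫ ‖ψ‖²`.
-/

open Filter Topology Set

section L2

variable {α E 𝕜 : Type*} [MeasurableSpace α] {μ : Measure α} [NormedAddCommGroup E]

theorem half_integral_norm_sq_sub_integral_norm_sq_le {f g : α → E}
    (hf : MemLp f 2 μ) (hg : MemLp g 2 μ) :
    1 / 2 * ∫ x, ‖f x‖ ^ 2 ∂μ - ∫ x, ‖g x‖ ^ 2 ∂μ ≤ ∫ x, ‖f x + g x‖ ^ 2 ∂μ := by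
  have hf_int := hf.norm.integrable_sq
  have hg_int := hg.norm.integrable_sq
  rw [← integral_const_mul, ← integral_sub (hf_int.const_mul _) hg_int]
  refine integral_mono ((hf_int.const_mul _).sub hg_int) (hf.add hg).norm.integrable_sq fun x ↦ ?_
  have triangle : ‖f x‖ ≤ ‖f x + g x‖ + ‖g x‖ := norm_le_add_norm_add (f x) (g x)
  have : ‖f x‖ ^ 2 ≤ 2 * (‖f x + g x‖ ^ 2 + ‖g x‖ ^ 2) :=
    (pow_le_pow_left₀ (norm_nonneg _) triangle 2).trans add_sq_le
  change 1 / 2 * ‖f x‖ ^ 2 - ‖g x‖ ^ 2 ≤ ‖f x + g x‖ ^ 2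
  linarith

theorem exists_integral_norm_smul_sq_le [NormedField 𝕜] [NormedSpace 𝕜 E] {b : α → 𝕜}
    (hb : MemLp b ⊤ μ) :
    ∃ K : ℝ, ∀ f : α → E, MemLp f 2 μ → ∫ x, ‖b x • f x‖ ^ 2 ∂μ ≤ K * ∫ x, ‖f x‖ ^ 2 ∂μ := by
  refine ⟨(eLpNorm b ⊤ μ).toReal ^ 2, fun f hf ↦ ?_⟩
  rw [← integral_const_mul]
  have hbf : MemLp (b • f) 2 μ := hf.smul hb
  refine integral_mono_ae hbf.norm.integrable_sq (hf.norm.integrable_sq.const_mul _) ?_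
  filter_upwards [ae_le_eLpNormEssSup (f := b) (μ := μ)] with x hx
  have norm_b_le : ‖b x‖ ≤ (eLpNorm b ⊤ μ).toReal := by
    rw [← toReal_enorm, eLpNorm_exponent_top]
    exact ENNReal.toReal_mono (by simpa using hb.eLpNorm_ne_top) hx
  rw [norm_smul, mul_pow]
  gcongr

end L2

theorem eventually_atBot_forall_le_sub_sq {α : Type*} {A : α → ℝ} (hA : BddBelow (range A))
    (R : ℝ) : ∀ᶠ ζ in atBot, ∀ x, R ≤ (ζ - A x) ^ 2 := by
  obtain ⟨c, hc⟩ := hA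
  filter_upwards [eventually_le_atBot (c - √R)] with ζ hζ x
  have hAx : c ≤ A x := hc (mem_range_self x)
  have hsqrt : √R ≤ A x - ζ := by linarith
  rw [sub_sq_comm]
  exact (Real.sqrt_le_left ((Real.sqrt_nonneg R).trans hsqrt)).1 hsqrt

section TwistedDeriv

variable {E : Type*} [NormedAddCommGroup E]

/-- The first-order operator `ψ ↦ ψ' + w ψ` on functions of a real variable. The off-diagonal part
of the fibered Dirac operator is made of two such operators, with opposite weights `w`. -/
noncomputable def twistedDeriv [NormedSpace ℝ E] (w : ℝ → ℝ) (ψ : ℝ → E) (x : ℝ) : E :=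
  deriv ψ x + w x • ψ x

theorem memLp_twistedDeriv [NormedSpace ℝ E] {w : ℝ → ℝ} {ψ : ℝ → E} {p : ENNReal}
    (hw : Continuous w) (hψ : ContDiff ℝ 1 ψ) (hψc : HasCompactSupport ψ) :
    MemLp (twistedDeriv w ψ) p :=
  ((hψ.continuous_deriv le_rfl).add (hw.smul hψ.continuous)).memLp_of_hasCompactSupport
    (hψc.deriv.add hψc.smul_left)

theorem integral_deriv_eq_zero_of_hasCompactSupport [NormedSpace ℝ E] {f : ℝ → E}
    (hf : ContDiff ℝ 1 f) (hfc : HasCompactSupport f) : ∫ x, deriv f x = 0 :=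
  integral_eq_zero_of_hasDerivAt_of_integrable
    (fun x ↦ (hf.differentiable one_ne_zero x).hasDerivAt)
    ((hf.continuous_deriv le_rfl).integrable_of_hasCompactSupport hfc.deriv)
    (hf.continuous.integrable_of_hasCompactSupport hfc)

variable [InnerProductSpace ℝ E]

theorem norm_twistedDeriv_sq {w : ℝ → ℝ} {ψ : ℝ → E} {x : ℝ}
    (hw : DifferentiableAt ℝ w x) (hψ : DifferentiableAt ℝ ψ x) :
    ‖twistedDeriv w ψ x‖ ^ 2 = ‖deriv ψ x‖ ^ 2 + (w x ^ 2 - deriv w x) * ‖ψ x‖ ^ 2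
      + deriv (fun y ↦ w y * ‖ψ y‖ ^ 2) x := by
  have hderiv : deriv (fun y ↦ w y * ‖ψ y‖ ^ 2) x
      = deriv w x * ‖ψ x‖ ^ 2 + w x * (2 * inner ℝ (ψ x) (deriv ψ x)) :=
    (hw.hasDerivAt.mul hψ.hasDerivAt.norm_sq).deriv
  rw [hderiv, twistedDeriv, norm_add_sq_real, real_inner_smul_right, real_inner_comm, norm_smul,
    mul_pow, Real.norm_eq_abs, sq_abs]
  ring

theorem mul_integral_norm_sq_le_integral_norm_twistedDeriv_sq {w : ℝ → ℝ} {ψ : ℝ → E} {R : ℝ}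
    (hw : ContDiff ℝ 1 w) (hψ : ContDiff ℝ 1 ψ) (hψc : HasCompactSupport ψ)
    (hR : ∀ x, R ≤ w x ^ 2 - deriv w x) :
    R * ∫ x, ‖ψ x‖ ^ 2 ≤ ∫ x, ‖twistedDeriv w ψ x‖ ^ 2 := by
  set g : ℝ → ℝ := fun x ↦ w x * ‖ψ x‖ ^ 2
  have hg : ContDiff ℝ 1 g := hw.mul (hψ.norm_sq ℝ)
  have hgc : HasCompactSupport g :=
    (hψc.comp_left (g := fun z ↦ ‖z‖ ^ 2) (by simp)).mul_left
  have hg'_int : Integrable (deriv g) :=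
    (hg.continuous_deriv le_rfl).integrable_of_hasCompactSupport hgc.deriv
  have hψ_int : Integrable fun x ↦ ‖ψ x‖ ^ 2 :=
    (hψ.continuous.memLp_of_hasCompactSupport hψc (p := 2)).norm.integrable_sq
  have hDψ_int : Integrable fun x ↦ ‖twistedDeriv w ψ x‖ ^ 2 :=
    (memLp_twistedDeriv hw.continuous hψ hψc).norm.integrable_sq
  calc R * ∫ x, ‖ψ x‖ ^ 2 = ∫ x, (R * ‖ψ x‖ ^ 2 + deriv g x) := by
        rw [integral_add (hψ_int.const_mul R) hg'_int, integral_const_mul,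
          integral_deriv_eq_zero_of_hasCompactSupport hg hgc, add_zero]
    _ ≤ ∫ x, ‖twistedDeriv w ψ x‖ ^ 2 := by
        refine integral_mono ((hψ_int.const_mul R).add hg'_int) hDψ_int fun x ↦ ?_
        change R * ‖ψ x‖ ^ 2 + deriv g x ≤ ‖twistedDeriv w ψ x‖ ^ 2
        rw [norm_twistedDeriv_sq (hw.differentiable one_ne_zero x)
          (hψ.differentiable one_ne_zero x)]
        linarith [mul_le_mul_of_nonneg_right (hR x) (sq_nonneg ‖ψ x‖), sq_nonneg ‖deriv ψ x‖]

end TwistedDeriv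

section Dirac

/-- A component of a one-dimensional Dirac operator: the off-diagonal term `-i (φ' + w φ)` acting on
one entry of the spinor plus the diagonal potential `b` acting on the other entry `χ`. -/
noncomputable def diracComponent (w b : ℝ → ℝ) (φ χ : ℝ → ℂ) (x : ℝ) : ℂ :=
  -Complex.I * twistedDeriv w φ x + b x • χ x

variable {w b : ℝ → ℝ} {φ χ : ℝ → ℂ}

theorem memLp_diracComponent (hw : Continuous w) (hb : MemLp b ⊤) (hφ : ContDiff ℝ 1 φ)
    (hφc : HasCompactSupport φ) (hχ : MemLp χ 2) : MemLp (diracComponent w b φ χ) 2 :=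
  ((memLp_twistedDeriv hw hφ hφc).const_mul _).add (hχ.smul hb)

theorem half_mul_sub_mul_le_integral_norm_diracComponent_sq {R K : ℝ}
    (hw : ContDiff ℝ 1 w) (hb : MemLp b ⊤) (hφ : ContDiff ℝ 1 φ)
    (hφc : HasCompactSupport φ) (hχ : MemLp χ 2) (hR : ∀ x, R ≤ w x ^ 2 - deriv w x)
    (hK : ∫ x, ‖b x • χ x‖ ^ 2 ≤ K * ∫ x, ‖χ x‖ ^ 2) :
    R / 2 * (∫ x, ‖φ x‖ ^ 2) - K * ∫ x, ‖χ x‖ ^ 2 ≤ ∫ x, ‖diracComponent w b φ χ x‖ ^ 2 := by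
  have hDφ := mul_integral_norm_sq_le_integral_norm_twistedDeriv_sq hw hφ hφc hR
  have hsplit := half_integral_norm_sq_sub_integral_norm_sq_le
    ((memLp_twistedDeriv hw.continuous hφ hφc).const_mul (-Complex.I)) (hχ.smul hb)
  simp only [norm_mul, norm_neg, Complex.norm_I, one_mul, Pi.smul_apply'] at hsplit
  unfold diracComponent
  linarith

theorem eventually_mul_integral_le_integral_norm_diracComponent_sq {A m V : ℝ → ℝ}
    (hA : ContDiff ℝ 1 A) (hA_bdd : BddBelow (range A))
    (hA'_bdd : Bornology.IsBounded (range (deriv A))) (hm : MemLp m ⊤) (hV : MemLp V ⊤) (M : ℝ) :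
    ∀ᶠ ζ : ℝ in atBot, ∀ ψ₁ ψ₂ : ℝ → ℂ, ContDiff ℝ 1 ψ₁ → ContDiff ℝ 1 ψ₂ →
      HasCompactSupport ψ₁ → HasCompactSupport ψ₂ →
      M * ∫ x : ℝ, (‖ψ₁ x‖ ^ 2 + ‖ψ₂ x‖ ^ 2) ≤
        ∫ x : ℝ, (‖diracComponent (fun x ↦ ζ - A x) (V + m) ψ₂ ψ₁ x‖ ^ 2
          + ‖diracComponent (fun x ↦ A x - ζ) (V - m) ψ₁ ψ₂ x‖ ^ 2) := by
  obtain ⟨L, hL⟩ := hA'_bdd.exists_norm_le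
  have hA' (x : ℝ) : |deriv A x| ≤ L := hL _ (mem_range_self x)
  obtain ⟨K₁, hK₁⟩ := exists_integral_norm_smul_sq_le (E := ℂ) (hV.add hm)
  obtain ⟨K₂, hK₂⟩ := exists_integral_norm_smul_sq_le (E := ℂ) (hV.sub hm)
  set K := max K₁ K₂
  filter_upwards [eventually_atBot_forall_le_sub_sq hA_bdd (2 * (M + K) + L)]
    with ζ hζ ψ₁ ψ₂ hψ₁ hψ₂ hψ₁c hψ₂c
  have hψ₁_L2 : MemLp ψ₁ 2 := hψ₁.continuous.memLp_of_hasCompactSupport hψ₁c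
  have hψ₂_L2 : MemLp ψ₂ 2 := hψ₂.continuous.memLp_of_hasCompactSupport hψ₂c
  have hw : ContDiff ℝ 1 fun x ↦ ζ - A x := contDiff_const.sub hA
  have hw_neg : ContDiff ℝ 1 fun x ↦ A x - ζ := hA.sub contDiff_const
  have hw_gap (x : ℝ) : 2 * (M + K) ≤ (ζ - A x) ^ 2 - deriv (fun x ↦ ζ - A x) x := by
    rw [deriv_const_sub]
    linarith [hζ x, neg_le_of_abs_le (hA' x)]
  have hw_neg_gap (x : ℝ) : 2 * (M + K) ≤ (A x - ζ) ^ 2 - deriv (fun x ↦ A x - ζ) x := by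
    rw [deriv_sub_const, sub_sq_comm]
    linarith [hζ x, le_of_abs_le (hA' x)]
  have hu := half_mul_sub_mul_le_integral_norm_diracComponent_sq hw (hV.add hm) hψ₂ hψ₂c hψ₁_L2
    hw_gap (hK₁ ψ₁ hψ₁_L2)
  have hv := half_mul_sub_mul_le_integral_norm_diracComponent_sq hw_neg (hV.sub hm) hψ₁ hψ₁c hψ₂_L2
    hw_neg_gap (hK₂ ψ₂ hψ₂_L2)
  have hψ₁_nonneg : 0 ≤ ∫ x, ‖ψ₁ x‖ ^ 2 := integral_nonneg fun x ↦ sq_nonneg _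
  have hψ₂_nonneg : 0 ≤ ∫ x, ‖ψ₂ x‖ ^ 2 := integral_nonneg fun x ↦ sq_nonneg _
  have hK₁_le := mul_le_mul_of_nonneg_right (le_max_left K₁ K₂) hψ₁_nonneg
  have hK₂_le := mul_le_mul_of_nonneg_right (le_max_right K₁ K₂) hψ₂_nonneg
  rw [integral_add hψ₁_L2.norm.integrable_sq hψ₂_L2.norm.integrable_sq,
    integral_add (memLp_diracComponent hw.continuous (hV.add hm) hψ₂ hψ₂c hψ₁_L2).norm.integrable_sq
      (memLp_diracComponent hw_neg.continuous (hV.sub hm) hψ₁ hψ₁c hψ₂_L2).norm.integrable_sq]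
  linarith

end Dirac

namespace IsSwitch

variable {c d : ℝ} {f : ℝ → ℝ}

theorem continuous (hf : IsSwitch c d f) : Continuous f := hf.1.continuous

theorem tendsto_atBot (hf : IsSwitch c d f) : Tendsto f atBot (𝓝 c) := by
  obtain ⟨-, α, -, -, hα, -⟩ := hf
  exact tendsto_const_nhds.congr' ((eventually_le_atBot α).mono fun x hx ↦ (hα x hx).symm)

theorem tendsto_atTop (hf : IsSwitch c d f) : Tendsto f atTop (𝓝 d) := by
  obtain ⟨-, -, β, -, -, hβ⟩ := hf
  exact tendsto_const_nhds.congr' ((eventually_ge_atTop β).mono fun x hx ↦ (hβ x hx).symm)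

theorem isBounded_range (hf : IsSwitch c d f) : Bornology.IsBounded (range f) :=
  hf.continuous.isBounded_range_iff_isBigO_atTop_atBot.2
    ⟨hf.tendsto_atTop.isBigO_one ℝ, hf.tendsto_atBot.isBigO_one ℝ⟩

theorem memLp_top (hf : IsSwitch c d f) : MemLp f ⊤ := by
  obtain ⟨K, hK⟩ := hf.isBounded_range.exists_norm_le
  exact memLp_top_of_bound hf.continuous.aestronglyMeasurable K
    (ae_of_all _ (forall_mem_range.1 hK))

theorem hasCompactSupport_deriv (hf : IsSwitch c d f) : HasCompactSupport (deriv f) := by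
  obtain ⟨-, α, β, -, hα, hβ⟩ := hf
  refine HasCompactSupport.intro (isCompact_Icc (a := α) (b := β)) fun x hx ↦ ?_
  rcases not_and_or.1 hx with hx | hx
  · have : f =ᶠ[𝓝 x] fun _ ↦ c := by
      filter_upwards [Iio_mem_nhds (not_le.1 hx)] with y hy using hα y (le_of_lt hy)
    rw [this.deriv_eq, deriv_const]
  · have : f =ᶠ[𝓝 x] fun _ ↦ d := by
      filter_upwards [Ioi_mem_nhds (not_le.1 hx)] with y hy using hβ y (le_of_lt hy)
    rw [this.deriv_eq, deriv_const]

theorem isBounded_range_deriv_id_mul (hf : IsSwitch c d f) :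
    Bornology.IsBounded (range (deriv fun x ↦ x * f x)) := by
  have hderiv (x : ℝ) : deriv (fun x ↦ x * f x) x = f x + x * deriv f x := by
    simpa using ((hasDerivAt_id' x).fun_mul (hf.1.differentiable (by simp) x).hasDerivAt).deriv
  have hcont : Continuous fun x ↦ x * deriv f x :=
    continuous_id.mul (hf.1.continuous_deriv (by simp))
  have hcompact : HasCompactSupport fun x ↦ x * deriv f x := hf.hasCompactSupport_deriv.mul_left
  refine (hf.isBounded_range.add (hcompact.isCompact_range hcont).isBounded).subset ?_
  rintro - ⟨x, rfl⟩
  rw [hderiv]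
  exact add_mem_add (mem_range_self x) (mem_range_self x)

theorem bddBelow_range_id_mul (hf : IsSwitch c d f) (hc : c < 0) (hd : 0 < d) :
    BddBelow (range fun x ↦ x * f x) := by
  have htends : Tendsto (fun x ↦ x * f x) (cocompact ℝ) atTop := by
    rw [cocompact_eq_atBot_atTop]
    exact (tendsto_id.atBot_mul_neg hc hf.tendsto_atBot).sup
      (tendsto_id.atTop_mul_pos hd hf.tendsto_atTop)
  obtain ⟨x₀, hx₀⟩ := (continuous_id.mul hf.continuous).exists_forall_le htends
  exact ⟨x₀ * f x₀, forall_mem_range.2 hx₀⟩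

end IsSwitch

theorem eigenvalues_blow_up_at_minus_infinity_general
    {A₂ m V : ℝ → ℝ} (hA₂ : ContDiff ℝ 1 A₂) (hA₂_bdd : BddBelow (range A₂))
    (hA₂'_bdd : Bornology.IsBounded (range (deriv A₂))) (hm : MemLp m ⊤) (hV : MemLp V ⊤) (M : ℝ) :
    ∃ ζ₀ : ℝ, ∀ ζ : ℝ, ζ ≤ ζ₀ →
      ∀ ψ₁ ψ₂ : ℝ → ℂ, ContDiff ℝ 1 ψ₁ → ContDiff ℝ 1 ψ₂ →
        HasCompactSupport ψ₁ → HasCompactSupport ψ₂ →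
        ∀ u v : ℝ → ℂ,
          (∀ x, u x = -Complex.I * deriv ψ₂ x
            - Complex.I * ((ζ : ℂ) - (A₂ x : ℂ)) * ψ₂ x
            + ((V x : ℂ) + (m x : ℂ)) * ψ₁ x) →
          (∀ x, v x = -Complex.I * deriv ψ₁ x
            + Complex.I * ((ζ : ℂ) - (A₂ x : ℂ)) * ψ₁ x
            + ((V x : ℂ) - (m x : ℂ)) * ψ₂ x) →
          M * ∫ x : ℝ, (‖ψ₁ x‖ ^ 2 + ‖ψ₂ x‖ ^ 2) ≤
            ∫ x : ℝ, (‖u x‖ ^ 2 + ‖v x‖ ^ 2) := by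
  obtain ⟨ζ₀, hζ₀⟩ := eventually_atBot.1 <|
    eventually_mul_integral_le_integral_norm_diracComponent_sq hA₂ hA₂_bdd hA₂'_bdd hm hV M
  refine ⟨ζ₀, fun ζ hζ ψ₁ ψ₂ hψ₁ hψ₂ hψ₁c hψ₂c u v hu hv ↦ ?_⟩
  have hu_eq : u = diracComponent (fun x ↦ ζ - A₂ x) (V + m) ψ₂ ψ₁ := by
    ext x
    simp only [hu, diracComponent, twistedDeriv, Complex.real_smul, Complex.ofReal_sub,
      Pi.add_apply, Complex.ofReal_add]
    ring
  have hv_eq : v = diracComponent (fun x ↦ A₂ x - ζ) (V - m) ψ₁ ψ₂ := by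
    ext x
    simp only [hv, diracComponent, twistedDeriv, Complex.real_smul, Complex.ofReal_sub,
      Pi.sub_apply]
    ring
  rw [hu_eq, hv_eq]
  exact hζ₀ ζ hζ ψ₁ ψ₂ hψ₁ hψ₂ hψ₁c hψ₂c

/-- When `B₋ < 0 < B₊`, all eigenvalues of the fibered operator `Ĥ(ζ)` tend to infinity
in absolute value uniformly as `ζ → −∞`: the quadratic form of `Ĥ(ζ)²` dominates any
multiple `M` of the `L²` norm for `ζ` sufficiently negative. -/
theorem eigenvalues_blow_up_at_minus_infinity
    (Bm Bp mm mp Vm Vp : ℝ) (hBm : Bm < 0) (hBp : 0 < Bp)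
    (B m V : ℝ → ℝ) (hB : IsSwitch Bm Bp B) (hm : IsSwitch mm mp m)
    (hV : IsSwitch Vm Vp V)
    (A₂ : ℝ → ℝ) (hA₂ : ∀ x, A₂ x = x * B x) :
    ∀ M : ℝ, 0 < M → ∃ ζ₀ : ℝ, ∀ ζ : ℝ, ζ ≤ ζ₀ →
      ∀ ψ₁ ψ₂ : ℝ → ℂ, ContDiff ℝ (⊤ : ℕ∞) ψ₁ → ContDiff ℝ (⊤ : ℕ∞) ψ₂ →
        HasCompactSupport ψ₁ → HasCompactSupport ψ₂ →
        ∀ u v : ℝ → ℂ,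
          (∀ x, u x = -Complex.I * deriv ψ₂ x
            - Complex.I * ((ζ : ℂ) - (A₂ x : ℂ)) * ψ₂ x
            + ((V x : ℂ) + (m x : ℂ)) * ψ₁ x) →
          (∀ x, v x = -Complex.I * deriv ψ₁ x
            + Complex.I * ((ζ : ℂ) - (A₂ x : ℂ)) * ψ₁ x
            + ((V x : ℂ) - (m x : ℂ)) * ψ₂ x) →
          M * ∫ x : ℝ, (‖ψ₁ x‖ ^ 2 + ‖ψ₂ x‖ ^ 2) ≤
            ∫ x : ℝ, (‖u x‖ ^ 2 + ‖v x‖ ^ 2) := by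
  intro M _
  obtain rfl : A₂ = fun x ↦ x * B x := funext hA₂
  obtain ⟨ζ₀, hζ₀⟩ := eigenvalues_blow_up_at_minus_infinity_general
    (contDiff_id.mul (hB.1.of_le (by simp))) (hB.bddBelow_range_id_mul hBm hBp)
    hB.isBounded_range_deriv_id_mul hm.memLp_top hV.memLp_top M
  exact ⟨ζ₀, fun ζ hζ ψ₁ ψ₂ hψ₁ hψ₂ ↦
    hζ₀ ζ hζ ψ₁ ψ₂ (hψ₁.of_le (by simp)) (hψ₂.of_le (by simp))⟩
end

section
/- Let 𝓗 be a complex Hilbert space, let H₀ be a self-adjoint operator with dense domain D ⊆ 𝓗 (so that i + H₀ and i − H₀ map D bijectively onto 𝓗 with bounded inverses (i ± H₀)⁻¹ : 𝓗 → D), and let W : D → 𝓗 be a linear map that is symmetric, i.e. ⟪W u, v⟫ = ⟪u, W v⟫ for all u, v ∈ D. Assume that the compositions (i + H₀)⁻¹ ∘ W and (i − H₀)⁻¹ ∘ W, initially defined on D, extend to bounded operators T₊ and T₋ on 𝓗. Then for every real number μ ≥ 0 with μ·‖T₊‖ < 1 and μ·‖T₋‖ < 1, the operators i + (H₀ + μW)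 and i − (H₀ + μW) map D bijectively onto 𝓗, and the operator H₀ + μW with domain D is self-adjoint. -/
open scoped ComplexInnerProductSpace

/-!
For `z = ± i`, symmetry of `H₀` and `W` turns `(conj z + H₀) T = W` on the domain into
`T† (z + H₀) = W`, where `T` is the bounded extension of `(conj z + H₀)⁻¹ W`. Hence
`z + H₀ + μ W = (1 + μ T†) (z + H₀)`, and the first factor is invertible by the Neumann series. A
symmetric operator `S` for which `i + S` and `-i + S` are both onto is self-adjoint.
-/

section Perturbation

open Function
open scoped ComplexConjugate

theorem bijective_of_inverse_mem {α β : Type*} {s : Set α} {f : s → β} {g : β → α}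
    (left_inv : ∀ x : s, g (f x) = x) (right_inv : ∀ y, ∃ hy : g y ∈ s, f ⟨g y, hy⟩ = y) :
    Bijective f :=
  bijective_iff_has_inverse.2
    ⟨fun y => ⟨g y, (right_inv y).1⟩, fun x => Subtype.ext (left_inv x), fun y => (right_inv y).2⟩

theorem bijective_neg_smul_add_iff {R M α : Type*} [Ring R] [AddCommGroup M] [Module R M]
    {z : R} {f g : α → M} :
    Bijective (fun x => -z • f x + g x) ↔ Bijective (fun x => z • f x - g x) := by
  rw [← Equiv.comp_bijective _ (Equiv.neg M)]
  simp only [comp_def, Equiv.neg_apply, neg_add, neg_smul, neg_neg, sub_eq_add_neg]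

theorem isUnit_one_add_of_norm_lt_one {R : Type*} [NormedRing R] [HasSummableGeomSeries R] {a : R}
    (ha : ‖a‖ < 1) : IsUnit (1 + a) := by
  simpa only [sub_neg_eq_add] using isUnit_one_sub_of_norm_lt_one ((norm_neg a).trans_lt ha)

variable {𝕜 E : Type*} [RCLike 𝕜] [NormedAddCommGroup E] [InnerProductSpace 𝕜 E]

theorem inner_smul_add_apply_left {A B : E →ₗ.[𝕜] E} (hAB : A.IsFormalAdjoint B) (z : 𝕜)
    (x : A.domain) (y : B.domain) :
    inner 𝕜 (z • (x : E) + A x) (y : E) = inner 𝕜 (x : E) (conj z • (y : E) + B y) := by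
  rw [inner_add_left, inner_add_right, inner_smul_left, inner_smul_right, hAB x y]

/-- The operator `H + V` with the domain of `H`, where the perturbation `V` need only be defined on
that domain. -/
def perturb (H : E →ₗ.[𝕜] E) (V : H.domain →ₗ[𝕜] E) : E →ₗ.[𝕜] E where
  domain := H.domain
  toFun := H.toFun + V

theorem isFormalAdjoint_perturb {H : E →ₗ.[𝕜] E} {V : H.domain →ₗ[𝕜] E}
    (hH : H.IsFormalAdjoint H)
    (hV : ∀ x y : H.domain, inner 𝕜 (V x) (y : E) = inner 𝕜 (x : E) (V y)) :
    (perturb H V).IsFormalAdjoint (perturb H V) := fun x y => by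
  change inner 𝕜 (H x + V x) (y : E) = inner 𝕜 (x : E) (H y + V y)
  rw [inner_add_left, inner_add_right, hH x y, hV x y]

variable [CompleteSpace E]

theorem isFormalAdjoint_self_of_isSelfAdjoint {A : E →ₗ.[𝕜] E} (hA : IsSelfAdjoint A) :
    A.IsFormalAdjoint A := by
  simpa only [LinearPMap.isSelfAdjoint_def.1 hA] using
    LinearPMap.adjoint_isFormalAdjoint hA.dense_domain

theorem adjoint_domain_le_of_surjective_smul_add {A : E →ₗ.[𝕜] E}
    (hdense : Dense (A.domain : Set E)) (hA : A.IsFormalAdjoint A) {z : 𝕜}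
    (hz : Surjective fun u : A.domain => z • (u : E) + A u)
    (hz' : Surjective fun u : A.domain => conj z • (u : E) + A u) :
    A.adjoint.domain ≤ A.domain := by
  intro y hy
  obtain ⟨u, hu : z • (u : E) + A u = z • y + A.adjoint ⟨y, hy⟩⟩ :=
    hz (z • y + A.adjoint ⟨y, hy⟩)
  obtain ⟨w, hw : conj z • (w : E) + A w = y - u⟩ := hz' (y - u)
  have inner_eq : inner 𝕜 y (y - u) = inner 𝕜 (u : E) (y - u) :=
    calc inner 𝕜 y (y - u)
      _ = inner 𝕜 (z • y + A.adjoint ⟨y, hy⟩) (w : E) := by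
        rw [← hw]
        exact (inner_smul_add_apply_left (A.adjoint_isFormalAdjoint hdense) z ⟨y, hy⟩ w).symm
      _ = inner 𝕜 (u : E) (y - u) := by rw [← hu, inner_smul_add_apply_left hA, hw]
  have y_eq_u : y = u := by
    rwa [← sub_eq_zero, ← inner_sub_left, inner_self_eq_zero, sub_eq_zero] at inner_eq
  exact y_eq_u ▸ u.2

theorem isSelfAdjoint_of_surjective_smul_add {A : E →ₗ.[𝕜] E}
    (hdense : Dense (A.domain : Set E)) (hA : A.IsFormalAdjoint A) {z : 𝕜}
    (hz : Surjective fun u : A.domain => z • (u : E) + A u)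
    (hz' : Surjective fun u : A.domain => conj z • (u : E) + A u) :
    IsSelfAdjoint A := by
  have le_adjoint : A ≤ A.adjoint := hA.le_adjoint hdense
  have domain_eq : A.domain = A.adjoint.domain :=
    le_adjoint.1.antisymm (adjoint_domain_le_of_surjective_smul_add hdense hA hz hz')
  exact (LinearPMap.eq_of_le_of_domain_eq le_adjoint domain_eq).symm

variable {H : E →ₗ.[𝕜] E} {V : H.domain →ₗ[𝕜] E} {T : E →L[𝕜] E} {z : 𝕜}

theorem adjoint_apply_smul_add (hdense : Dense (H.domain : Set E)) (hH : H.IsFormalAdjoint H)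
    (hV : ∀ x y : H.domain, inner 𝕜 (V x) (y : E) = inner 𝕜 (x : E) (V y))
    (hT : ∀ x : H.domain, ∃ y : H.domain, y = T x ∧ conj z • (y : E) + H y = V x)
    (u : H.domain) :
    T.adjoint (z • (u : E) + H u) = V u := by
  refine hdense.eq_of_inner_right 𝕜 fun x hx => ?_
  obtain ⟨y, y_eq, hy⟩ := hT ⟨x, hx⟩
  calc inner 𝕜 x (T.adjoint (z • (u : E) + H u))
    _ = inner 𝕜 (y : E) (z • (u : E) + H u) := by
      rw [ContinuousLinearMap.adjoint_inner_right, y_eq]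
    _ = inner 𝕜 (V ⟨x, hx⟩) (u : E) := by
      rw [← hy, inner_smul_add_apply_left hH, RCLike.conj_conj]
    _ = inner 𝕜 x (V u) := hV ⟨x, hx⟩ u

theorem bijective_smul_add_add_of_isUnit (hdense : Dense (H.domain : Set E))
    (hH : H.IsFormalAdjoint H)
    (hV : ∀ x y : H.domain, inner 𝕜 (V x) (y : E) = inner 𝕜 (x : E) (V y))
    (hT : ∀ x : H.domain, ∃ y : H.domain, y = T x ∧ conj z • (y : E) + H y = V x)
    (hT_unit : IsUnit (1 + T)) (hz : Bijective fun u : H.domain => z • (u : E) + H u) :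
    Bijective fun u : H.domain => z • (u : E) + (H u + V u) := by
  have adjoint_unit : IsUnit (1 + T.adjoint) := by
    simpa only [star_add, star_one, ContinuousLinearMap.star_eq_adjoint] using hT_unit.star
  have factorization : (fun u : H.domain => z • (u : E) + (H u + V u)) =
      ⇑(1 + T.adjoint) ∘ fun u : H.domain => z • (u : E) + H u := by
    funext u
    simp only [comp_apply, add_apply, one_apply_eq_self,
      adjoint_apply_smul_add hdense hH hV hT, add_assoc]
  rw [factorization]
  exact (ContinuousLinearMap.isUnit_iff_bijective.1 adjoint_unit).comp hz

end Perturbation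

/-- If `H₀` is self-adjoint with dense domain `D`, with bounded resolvents
`R₊ = (i + H₀)⁻¹` and `R₋ = (i − H₀)⁻¹`, and `W : D → 𝓗` is symmetric with
`(i ± H₀)⁻¹ W` extending to bounded operators `T₊`, `T₋` on `𝓗`, then for every
`μ ≥ 0` with `μ‖T₊‖ < 1` and `μ‖T₋‖ < 1`, the operators `i ± (H₀ + μW)` map `D`
bijectively onto `𝓗`, and `H₀ + μW` with domain `D` is self-adjoint. -/
theorem selfAdjoint_add_small_perturbation
    {𝓗 : Type*} [NormedAddCommGroup 𝓗] [InnerProductSpace ℂ 𝓗] [CompleteSpace 𝓗]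
    (H₀ : 𝓗 →ₗ.[ℂ] 𝓗) (hdense : Dense (H₀.domain : Set 𝓗))
    (hH₀ : IsSelfAdjoint H₀)
    (Rp Rm : 𝓗 →L[ℂ] 𝓗)
    (hRp : ∀ u : H₀.domain, Rp (Complex.I • (u : 𝓗) + H₀ u) = u)
    (hRp' : ∀ v : 𝓗, ∃ hv : Rp v ∈ H₀.domain,
      Complex.I • (Rp v) + H₀ ⟨Rp v, hv⟩ = v)
    (hRm : ∀ u : H₀.domain, Rm (Complex.I • (u : 𝓗) - H₀ u) = u)
    (hRm' : ∀ v : 𝓗, ∃ hv : Rm v ∈ H₀.domain,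
      Complex.I • (Rm v) - H₀ ⟨Rm v, hv⟩ = v)
    (W : H₀.domain →ₗ[ℂ] 𝓗)
    (hW : ∀ u v : H₀.domain, ⟪W u, (v : 𝓗)⟫ = ⟪(u : 𝓗), W v⟫)
    (Tp Tm : 𝓗 →L[ℂ] 𝓗)
    (hTp : ∀ u : H₀.domain, Tp (u : 𝓗) = Rp (W u))
    (hTm : ∀ u : H₀.domain, Tm (u : 𝓗) = Rm (W u))
    (μ : ℝ) (hμ : 0 ≤ μ) (hμp : μ * ‖Tp‖ < 1) (hμm : μ * ‖Tm‖ < 1) :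
    Function.Bijective
        (fun u : H₀.domain => Complex.I • (u : 𝓗) + (H₀ u + (μ : ℂ) • W u)) ∧
      Function.Bijective
        (fun u : H₀.domain => Complex.I • (u : 𝓗) - (H₀ u + (μ : ℂ) • W u)) ∧
      IsSelfAdjoint
        ({ domain := H₀.domain, toFun := H₀.toFun + (μ : ℂ) • W } : 𝓗 →ₗ.[ℂ] 𝓗) := by
  have hH : H₀.IsFormalAdjoint H₀ := isFormalAdjoint_self_of_isSelfAdjoint hH₀
  have hV (u v : H₀.domain) : ⟪((μ : ℂ) • W) u, (v : 𝓗)⟫ = ⟪(u : 𝓗), ((μ : ℂ) • W) v⟫ := by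
    simp only [LinearMap.smul_apply, inner_smul_left, inner_smul_right, Complex.conj_ofReal, hW]
  have norm_smul_lt {T : 𝓗 →L[ℂ] 𝓗} (hT : μ * ‖T‖ < 1) : ‖(μ : ℂ) • T‖ < 1 := by
    rwa [norm_smul, Complex.norm_of_nonneg hμ]
  have plus_bijective : Function.Bijective
      fun u : H₀.domain => Complex.I • (u : 𝓗) + (H₀ u + ((μ : ℂ) • W) u) := by
    -- Since `conj i + H₀ = -(i - H₀)`, its inverse is `-Rm`: hence the sign of `T`.
    refine bijective_smul_add_add_of_isUnit (T := -((μ : ℂ) • Tm)) hdense hH hV (fun u => ?_)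
      (isUnit_one_add_of_norm_lt_one ((norm_neg _).trans_lt (norm_smul_lt hμm)))
      (bijective_of_inverse_mem hRp hRp')
    obtain ⟨hv, h⟩ := hRm' (((μ : ℂ) • W) u)
    exact ⟨-⟨_, hv⟩, by simp [hTm], by simpa [LinearPMap.map_neg, sub_eq_add_neg] using h⟩
  have minus_bijective : Function.Bijective
      fun u : H₀.domain => -Complex.I • (u : 𝓗) + (H₀ u + ((μ : ℂ) • W) u) := by
    refine bijective_smul_add_add_of_isUnit (T := (μ : ℂ) • Tp) hdense hH hV (fun u => ?_)
      (isUnit_one_add_of_norm_lt_one (norm_smul_lt hμp))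
      (bijective_neg_smul_add_iff.2 (bijective_of_inverse_mem hRm hRm'))
    obtain ⟨hv, h⟩ := hRp' (((μ : ℂ) • W) u)
    exact ⟨⟨_, hv⟩, by simp [hTp], by simpa using h⟩
  refine ⟨plus_bijective, bijective_neg_smul_add_iff.1 minus_bijective, ?_⟩
  exact isSelfAdjoint_of_surjective_smul_add (A := perturb H₀ ((μ : ℂ) • W)) hdense
    (isFormalAdjoint_perturb hH hV) plus_bijective.2
    (by rw [Complex.conj_I]; exact minus_bijective.2)
end
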